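/- The open set condition holds for {S_i}_{i=1}^m if and only if S_σ ≠ S_τ (as maps ℝ → ℝ) for all distinct finite words σ ≠ τ over {1,…,m}. -/

import Mathlib

open Polynomial Filter

noncomputable section

namespace PVOSC

variable {m : ℕ}

/-- `λ⁻¹` is a Pisot (P.V.) number: an algebraic integer `> 1` all of whose
Galois conjugates other than itself have complex absolute value `< 1`. -/
def IsPisot (θ : ℝ) : Prop :=
  1 < θ ∧ IsIntegral ℤ θ ∧
    ∀ z : ℂ, aeval z (minpoly ℤ θ) = 0 → z ≠ (θ : ℂ) → ‖z‖ < 1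

/-- `p_σ` for a finite word `σ`. -/
def wordP (p : Fin m → ℕ) (σ : List (Fin m)) : ℕ := (σ.map p).sum

/-- The contracting similitude `S_i(x) = λ^{p_i} x + b_i`. -/
def Smap (lam : ℝ) (p : Fin m → ℕ) (b : Fin m → ℝ) (i : Fin m) : ℝ → ℝ :=
  fun x => lam ^ p i * x + b i

/-- `S_σ = S_{i₁} ∘ ⋯ ∘ S_{i_k}` for `σ = i₁ ⋯ i_k`. -/
def SW (lam : ℝ) (p : Fin m → ℕ) (b : Fin m → ℝ) (σ : List (Fin m)) : ℝ → ℝ :=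
  σ.foldr (fun i f => Smap lam p b i ∘ f) id

/-- `b_σ`, the translation part of `S_σ`. -/
def wordB (lam : ℝ) (p : Fin m → ℕ) (b : Fin m → ℝ) (σ : List (Fin m)) : ℝ :=
  SW lam p b σ 0

/-- `B = {0, b₁, …, b_m}`. -/
def Bset (b : Fin m → ℝ) : Set ℝ := insert 0 (Set.range b)

/-- `B − B`. -/
def BB (b : Fin m → ℝ) : Set ℝ := {x | ∃ u ∈ Bset b, ∃ v ∈ Bset b, x = u - v}

/-- `max_i |b_i|`. -/
def bmax (b : Fin m → ℝ) : ℝ := ⨆ i, |b i|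

/-- The set `𝒞`. -/
def Cset (lam : ℝ) (b : Fin m → ℝ) (T : ℕ) : Set ℝ :=
  {x | |x| ≤ (1 + lam ^ (1 - (T : ℤ))) * bmax b / (1 - lam) ∧
    ∃ R : ℝ[X], (∀ n, R.coeff n ∈ BB b) ∧ lam ^ (2 - (T : ℤ)) * x = R.eval lam⁻¹}

/-- The vertex set `Ξ = {n ∈ ℤ : |n| ≤ T−1} × 𝒞`. -/
def Xi (lam : ℝ) (b : Fin m → ℝ) (T : ℕ) : Set (ℤ × ℝ) :=
  {v | |v.1| ≤ (T : ℤ) - 1 ∧ v.2 ∈ Cset lam b T}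

/-- The open set condition. -/
def OSC (lam : ℝ) (p : Fin m → ℕ) (b : Fin m → ℝ) : Prop :=
  ∃ U : Set ℝ, U.Nonempty ∧ IsOpen U ∧ (⋃ i, Smap lam p b i '' U) ⊆ U ∧
    ∀ i j : Fin m, i ≠ j → Smap lam p b i '' U ∩ Smap lam p b j '' U = ∅

/-- The strong separation condition for the attractor `E`. -/
def SSC (lam : ℝ) (p : Fin m → ℕ) (b : Fin m → ℝ) (E : Set ℝ) : Prop :=
  ∀ i j : Fin m, i ≠ j → Smap lam p b i '' E ∩ Smap lam p b j '' E = ∅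

/-- Group law on `ℤ × ℝ`: `(p₁,c₁)·(p₂,c₂) = (p₁+p₂, λ^{p₁} c₂ + c₁)`. -/
def gmul (lam : ℝ) (u v : ℤ × ℝ) : ℤ × ℝ := (u.1 + v.1, lam ^ u.1 * v.2 + u.2)

/-- Inverse for the group law: `(p,c)⁻¹ = (−p, −λ^{−p} c)`. -/
def ginv (lam : ℝ) (u : ℤ × ℝ) : ℤ × ℝ := (-u.1, -(lam ^ (-u.1) * u.2))

/-- The group element `(p_σ, b_σ)` associated to a finite word `σ`. -/
def elem (lam : ℝ) (p : Fin m → ℕ) (b : Fin m → ℝ) (σ : List (Fin m)) : ℤ × ℝ :=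
  ((wordP p σ : ℤ), wordB lam p b σ)

/-- The sequence `(q_k, c_k)` with the recursive structure w.r.t. `({α_k}, {β_k})`:
`recSeq … k = (q_{k+1}, c_{k+1})`, i.e. index `k` corresponds to `(q_{k+1}, c_{k+1})`. -/
def recSeq (lam : ℝ) (p : Fin m → ℕ) (b : Fin m → ℝ) (α β : ℕ → List (Fin m)) : ℕ → ℤ × ℝ
  | 0 => gmul lam (ginv lam (elem lam p b (β 0))) (elem lam p b (α 0))
  | (k+1) => gmul lam (ginv lam (elem lam p b (β (k+1))))
      (gmul lam (recSeq lam p b α β k) (elem lam p b (α (k+1))))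

/-- The edge relation of the directed graph `G` on `Ξ`. -/
def edge (lam : ℝ) (p : Fin m → ℕ) (b : Fin m → ℝ) (T : ℕ) (u v : ℤ × ℝ) : Prop :=
  u ∈ Xi lam b T ∧ v ∈ Xi lam b T ∧
    ∃ α β : List (Fin m), 1 ≤ wordP p α ∧ wordP p α ≤ 2 * T - 1 ∧
      1 ≤ wordP p β ∧ wordP p β ≤ 2 * T - 1 ∧
      v.1 = (wordP p α : ℤ) + u.1 - (wordP p β : ℤ) ∧
      v.2 = lam ^ (-(wordP p β : ℤ)) * u.2 + lam ^ (u.1 - (wordP p β : ℤ)) * wordB lam p b α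
        - lam ^ (-(wordP p β : ℤ)) * wordB lam p b β

/-- `Λ = Ξ ∩ {(p_j − p_i, λ^{−p_i}(b_j − b_i)) : i ≠ j}`. -/
def Lam (lam : ℝ) (p : Fin m → ℕ) (b : Fin m → ℝ) (T : ℕ) : Set (ℤ × ℝ) :=
  Xi lam b T ∩ {v | ∃ i j : Fin m, i ≠ j ∧
    v = ((p j : ℤ) - (p i : ℤ), lam ^ (-(p i : ℤ)) * (b j - b i))}

/-- The length-`k` prefix of an infinite word `ω`. -/
def prefixList (ω : ℕ → Fin m) (k : ℕ) : List (Fin m) := (List.range k).map ω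

lemma SW_cons (lam : ℝ) (p : Fin m → ℕ) (b : Fin m → ℝ) (i : Fin m) (σ : List (Fin m)) (x : ℝ) :
    SW lam p b (i :: σ) x = lam ^ p i * SW lam p b σ x + b i := rfl

lemma SW_append (lam : ℝ) (p : Fin m → ℕ) (b : Fin m → ℝ) (σ τ : List (Fin m)) (x : ℝ) :
    SW lam p b (σ ++ τ) x = SW lam p b σ (SW lam p b τ x) := by
  induction σ with
  | nil => rfl
  | cons i σ ih => rw [List.cons_append, SW_cons, SW_cons, ih]

lemma wordP_cons (p : Fin m → ℕ) (i : Fin m) (σ : List (Fin m)) :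
    wordP p (i :: σ) = p i + wordP p σ := by simp [wordP]

lemma wordP_append (p : Fin m → ℕ) (σ τ : List (Fin m)) :
    wordP p (σ ++ τ) = wordP p σ + wordP p τ := by simp [wordP]

lemma SW_apply (lam : ℝ) (p : Fin m → ℕ) (b : Fin m → ℝ) (σ : List (Fin m)) (x : ℝ) :
    SW lam p b σ x = lam ^ wordP p σ * x + wordB lam p b σ := by
  induction σ with
  | nil => simp [SW, wordP, wordB]
  | cons i σ ih =>
    have h : wordB lam p b (i :: σ) = lam ^ p i * wordB lam p b σ + b i := rfl
    rw [SW_cons, ih, wordP_cons, h]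
    ring

lemma wordB_cons (lam : ℝ) (p : Fin m → ℕ) (b : Fin m → ℝ) (i : Fin m) (σ : List (Fin m)) :
    wordB lam p b (i :: σ) = lam ^ p i * wordB lam p b σ + b i := rfl

lemma wordP_pos (p : Fin m → ℕ) (hp : ∀ i, 1 ≤ p i) (σ : List (Fin m)) (h : σ ≠ []) :
    1 ≤ wordP p σ := by
  cases σ with
  | nil => exact absurd rfl h
  | cons i σ => rw [wordP_cons]; have := hp i; omega

lemma SW_ne_id (lam : ℝ) (hlam0 : 0 < lam) (hlam1 : lam < 1) (p : Fin m → ℕ)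
    (hp : ∀ i, 1 ≤ p i) (b : Fin m → ℝ) (σ : List (Fin m)) (h : σ ≠ []) :
    SW lam p b σ ≠ SW lam p b [] := by
  intro heq
  have h0 : SW lam p b σ 0 = 0 := by rw [heq]; rfl
  have h1 : SW lam p b σ 1 = 1 := by rw [heq]; rfl
  rw [SW_apply] at h0 h1
  have h2 : lam ^ wordP p σ < 1 :=
    pow_lt_one₀ hlam0.le hlam1 (by have := wordP_pos p hp σ h; omega)
  linarith

/-- Forward direction. -/
lemma osc_forward (lam : ℝ) (hlam0 : 0 < lam) (hlam1 : lam < 1) (p : Fin m → ℕ)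
    (hp : ∀ i, 1 ≤ p i) (b : Fin m → ℝ) (hO : OSC lam p b) :
    ∀ σ τ : List (Fin m), σ ≠ τ → SW lam p b σ ≠ SW lam p b τ := by
  obtain ⟨U, ⟨x, hx⟩, -, hsub, hdis⟩ := hO
  have hmem : ∀ σ : List (Fin m), SW lam p b σ x ∈ U := by
    intro σ
    induction σ with
    | nil => exact hx
    | cons i σ ih => exact hsub (Set.mem_iUnion.2 ⟨i, _, ih, rfl⟩)
  intro σ
  induction σ with
  | nil =>
    intro τ hne heq
    exact SW_ne_id lam hlam0 hlam1 p hp b τ hne.symm heq.symm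
  | cons i σ ih =>
    intro τ hne heq
    cases τ with
    | nil => exact SW_ne_id lam hlam0 hlam1 p hp b _ hne heq
    | cons j τ =>
      by_cases hij : i = j
      · subst hij
        refine ih τ (fun h => hne (by rw [h])) ?_
        funext y
        have := congrFun heq y
        rw [SW_cons, SW_cons] at this
        have hpos : lam ^ p i ≠ 0 := (pow_pos hlam0 _).ne'
        exact mul_left_cancel₀ hpos (add_right_cancel this)
      · have hmemi : SW lam p b (i :: σ) x ∈ Smap lam p b i '' U ∩ Smap lam p b j '' U :=
          ⟨⟨_, hmem σ, rfl⟩, by rw [heq]; exact ⟨_, hmem τ, rfl⟩⟩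
        rw [hdis i j hij] at hmemi
        exact hmemi

/-- Words have prefixes of prescribed weight. -/
lemma exists_prefix (p : Fin m → ℕ) (T : ℕ) (hT0 : 0 < T) (hT : ∀ i, p i ≤ T) :
    ∀ (w : List (Fin m)) (n : ℕ), n ≤ wordP p w →
      ∃ τ s, w = τ ++ s ∧ n ≤ wordP p τ ∧ wordP p τ < n + T := by
  intro w
  induction w with
  | nil => intro n hn; exact ⟨[], [], rfl, hn, by simp [wordP]; omega⟩
  | cons i w ih =>
    intro n hn
    rcases Nat.eq_zero_or_pos n with h0 | h0
    · exact ⟨[], i :: w, rfl, by omega, by simp [wordP]; omega⟩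
    · rw [wordP_cons] at hn
      have hTi := hT i
      by_cases hni : n ≤ p i
      · exact ⟨[i], w, rfl, by simpa [wordP] using hni, by simp [wordP]; omega⟩
      · obtain ⟨τ, s, h1, h2, h3⟩ := ih (n - p i) (by omega)
        refine ⟨i :: τ, s, by rw [h1]; rfl, ?_, ?_⟩ <;> rw [wordP_cons] <;> omega

/-- Polynomial representation of the translation parts. -/
lemma exists_poly (lam : ℝ) (hlam0 : 0 < lam) (p : Fin m → ℕ) (hp : ∀ i, 1 ≤ p i)
    (b : Fin m → ℝ) (z : Fin m → ℤ) (hz : ∀ i, b i = z i) (D : ℤ) (hD0 : 0 ≤ D)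
    (hD : ∀ i, |z i| ≤ D) :
    ∀ (σ : List (Fin m)) (N : ℕ), wordP p σ ≤ N →
      ∃ R : ℤ[X], (∀ n, |R.coeff n| ≤ D) ∧ (∀ n, N < n → R.coeff n = 0) ∧
        lam⁻¹ ^ N * wordB lam p b σ = aeval lam⁻¹ R := by
  intro σ
  induction σ with
  | nil => intro N _; exact ⟨0, by simpa using hD0, by simp, by simp [wordB, SW]⟩
  | cons i σ ih =>
    intro N hN
    rw [wordP_cons] at hN
    obtain ⟨R, h1, h2, h3⟩ := ih (N - p i) (by omega)
    have hpi := hp i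
    refine ⟨R + C (z i) * X ^ N, ?_, ?_, ?_⟩
    · intro n
      rw [coeff_add, coeff_C_mul_X_pow]
      split_ifs with h
      · rw [h2 n (by omega)]; simpa using hD i
      · simpa using h1 n
    · intro n hn
      rw [coeff_add, coeff_C_mul_X_pow, if_neg (by omega), h2 n (by omega)]; simp
    · rw [map_add, ← h3, wordB_cons, hz]
      have : lam⁻¹ ^ N = lam⁻¹ ^ (N - p i) * lam⁻¹ ^ p i := by
        rw [← pow_add]; congr 1; omega
      have h4 : lam⁻¹ ^ p i * lam ^ p i = 1 := by
        rw [← mul_pow, inv_mul_cancel₀ hlam0.ne', one_pow]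
      rw [map_mul, map_pow, aeval_X, aeval_C, eq_intCast]
      linear_combination (lam ^ p i * wordB lam p b σ) * this +
        (lam⁻¹ ^ (N - p i) * wordB lam p b σ) * h4

lemma norm_aeval_le (w : ℂ) (hw : ‖w‖ < 1) (D : ℤ) (R : ℤ[X])
    (hR : ∀ n, |R.coeff n| ≤ D) : ‖aeval w R‖ ≤ D / (1 - ‖w‖) := by
  have hD0 : (0 : ℝ) ≤ D := by exact_mod_cast (abs_nonneg _).trans (hR 0)
  rw [aeval_eq_sum_range]
  calc ‖∑ i ∈ Finset.range (R.natDegree + 1), R.coeff i • w ^ i‖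
      ≤ ∑ i ∈ Finset.range (R.natDegree + 1), (D : ℝ) * ‖w‖ ^ i := by
        refine norm_sum_le_of_le _ fun i _ => ?_
        rw [zsmul_eq_mul, norm_mul, norm_pow]
        gcongr
        rw [Complex.norm_intCast]
        exact_mod_cast hR i
    _ = D * ∑ i ∈ Finset.range (R.natDegree + 1), ‖w‖ ^ i := by rw [Finset.mul_sum]
    _ ≤ D * (1 - ‖w‖)⁻¹ := by
        gcongr
        rw [← tsum_geometric_of_lt_one (norm_nonneg w) hw]
        exact (summable_geometric_of_lt_one (norm_nonneg w) hw).sum_le_tsum _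
          (fun i _ => by positivity)
    _ = D / (1 - ‖w‖) := by rw [div_eq_mul_inv]

open IntermediateField in
/-- Garsia-type finiteness. -/
lemma pisot_finite (θ : ℝ) (h : IsPisot θ) (D : ℤ) (B : ℝ) :
    {x : ℝ | |x| ≤ B ∧ ∃ R : ℤ[X], (∀ n, |R.coeff n| ≤ D) ∧ x = aeval θ R}.Finite := by
  obtain ⟨-, hint, hconj⟩ := h
  have hintQ : IsIntegral ℚ θ := hint.tower_top
  haveI : FiniteDimensional ℚ ℚ⟮θ⟯ := adjoin.finiteDimensional hintQ
  haveI : NumberField ℚ⟮θ⟯ := { }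
  let g : ℚ⟮θ⟯ := AdjoinSimple.gen ℚ θ
  have hg : algebraMap ℚ⟮θ⟯ ℝ g = θ := AdjoinSimple.algebraMap_gen ℚ θ
  have hgint : IsIntegral ℤ g := by
    rw [← isIntegral_algebraMap_iff (B := ℝ) (algebraMap ℚ⟮θ⟯ ℝ).injective, hg]
    exact hint
  let Cb : ℝ := B + ∑ φ : ℚ⟮θ⟯ →+* ℂ, |(D : ℝ) / (1 - ‖φ g‖)|
  have hfin := NumberField.Embeddings.finite_of_norm_le ℚ⟮θ⟯ ℂ Cb
  refine (hfin.image (algebraMap ℚ⟮θ⟯ ℝ)).subset ?_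
  rintro x ⟨hxB, R, hR, rfl⟩
  have haev : algebraMap ℚ⟮θ⟯ ℝ (aeval g R) = aeval θ R := by
    rw [← aeval_algebraMap_apply, hg]
  refine ⟨aeval g R, ⟨?_, ?_⟩, haev⟩
  · rw [aeval_eq_sum_range]
    exact IsIntegral.sum _ fun i _ => (hgint.pow i).smul _
  · intro φ
    have hφ : φ (aeval g R) = aeval (φ g) R := by
      simp [aeval_def, hom_eval₂]
      congr 1
      exact RingHom.ext_int _ _
    have hB0 : 0 ≤ B := (abs_nonneg _).trans hxB
    have hsum : |(D : ℝ) / (1 - ‖φ g‖)| ≤ ∑ φ : ℚ⟮θ⟯ →+* ℂ, |(D : ℝ) / (1 - ‖φ g‖)| :=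
      Finset.single_le_sum (f := fun φ : ℚ⟮θ⟯ →+* ℂ => |(D : ℝ) / (1 - ‖φ g‖)|)
        (fun _ _ => abs_nonneg _) (Finset.mem_univ φ)
    rw [hφ]
    by_cases hz : φ g = (θ : ℂ)
    · rw [hz]
      have : aeval (θ : ℂ) R = ((aeval θ R : ℝ) : ℂ) := by
        have := aeval_algebraMap_apply ℂ θ R
        simpa using this
      rw [this, Complex.norm_real, Real.norm_eq_abs]
      have := (abs_nonneg _).trans hsum
      linarith
    · have hroot : aeval (φ g) (minpoly ℤ θ) = 0 := by
        have h1 : aeval g (minpoly ℤ θ) = 0 := by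
          apply (algebraMap ℚ⟮θ⟯ ℝ).injective
          rw [← aeval_algebraMap_apply, hg, minpoly.aeval, map_zero]
        have h2 : φ (aeval g (minpoly ℤ θ)) = aeval (φ g) (minpoly ℤ θ) := by
          simp [aeval_def, hom_eval₂]
          congr 1
          exact RingHom.ext_int _ _
        rw [← h2, h1, map_zero]
      have hlt := hconj _ hroot hz
      have := norm_aeval_le _ hlt D R hR
      have := le_abs_self ((D : ℝ) / (1 - ‖φ g‖))
      linarith

/-- Neighbours of a word. -/
def Nbr (lam : ℝ) (p : Fin m → ℕ) (b : Fin m → ℝ) (T : ℕ) (M : ℝ) (σ : List (Fin m)) :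
    Set (List (Fin m)) :=
  {τ | wordP p σ ≤ wordP p τ ∧ wordP p τ < wordP p σ + T ∧
    ∃ x y : ℝ, |x| < M ∧ |y| < M ∧ SW lam p b τ x = SW lam p b σ y}

lemma Nbr_append (lam : ℝ) (p : Fin m → ℕ) (b : Fin m → ℝ) (T : ℕ) (M : ℝ)
    (ρ σ : List (Fin m)) :
    (fun τ => ρ ++ τ) '' Nbr lam p b T M σ ⊆ Nbr lam p b T M (ρ ++ σ) := by
  rintro _ ⟨τ, ⟨h1, h2, x, y, hx, hy, h3⟩, rfl⟩
  refine ⟨?_, ?_, x, y, hx, hy, ?_⟩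
  · simp only [wordP_append]; omega
  · simp only [wordP_append]; omega
  · rw [SW_append, SW_append, h3]

lemma osc_backward (lam : ℝ) (hlam0 : 0 < lam) (hlam1 : lam < 1)
    (hPisot : IsPisot lam⁻¹) (hm : 2 ≤ m) (p : Fin m → ℕ) (hp : ∀ i, 1 ≤ p i)
    (b : Fin m → ℝ) (hbZ : ∀ i, ∃ z : ℤ, b i = (z : ℝ))
    (hinj : ∀ σ τ : List (Fin m), σ ≠ [] → τ ≠ [] → σ ≠ τ → SW lam p b σ ≠ SW lam p b τ) :
    OSC lam p b := by
  choose z hz using hbZ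
  obtain ⟨D, hD0, hD⟩ : ∃ D : ℤ, 0 ≤ D ∧ ∀ i, |z i| ≤ D :=
    ⟨∑ i, |z i|, Finset.sum_nonneg fun _ _ => abs_nonneg _, fun i =>
      Finset.single_le_sum (f := fun i => |z i|) (fun _ _ => abs_nonneg _) (Finset.mem_univ i)⟩
  obtain ⟨T, hT0, hT⟩ : ∃ T : ℕ, 0 < T ∧ ∀ i, p i ≤ T :=
    ⟨∑ i, p i + 1, by omega, fun i =>
      (Finset.single_le_sum (f := p) (fun _ _ => Nat.zero_le _) (Finset.mem_univ i)).trans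
        (Nat.le_succ _)⟩
  have h1l : 0 < 1 - lam := by linarith
  have hD0' : (0 : ℝ) ≤ D := by exact_mod_cast hD0
  obtain ⟨M, hM0, hM⟩ : ∃ M : ℝ, 0 < M ∧ lam * M + D < M := by
    refine ⟨(D + 1) / (1 - lam), by positivity, ?_⟩
    have : (1 - lam) * ((D + 1) / (1 - lam)) = D + 1 := by field_simp
    nlinarith
  have hSI : ∀ (i : Fin m) (x : ℝ), |x| < M → |lam ^ p i * x + b i| < M := by
    intro i x hx
    have hb : |b i| ≤ D := by rw [hz]; exact_mod_cast hD i
    have hpw : lam ^ p i ≤ lam := by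
      simpa using pow_le_pow_of_le_one hlam0.le hlam1.le (hp i)
    calc |lam ^ p i * x + b i| ≤ |lam ^ p i * x| + |b i| := abs_add_le _ _
      _ = lam ^ p i * |x| + |b i| := by rw [abs_mul, abs_of_pos (pow_pos hlam0 _)]
      _ ≤ lam * M + D := by gcongr
      _ < M := hM
  have hSWI : ∀ (σ : List (Fin m)) (x : ℝ), |x| < M → |SW lam p b σ x| < M := by
    intro σ x hx
    induction σ with
    | nil => exact hx
    | cons i σ ih => rw [SW_cons]; exact hSI i _ ih
  -- uniform finiteness
  have hFfin := pisot_finite lam⁻¹ hPisot (2 * D) (lam⁻¹ ^ T * (2 * M))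
  set F := {x : ℝ | |x| ≤ lam⁻¹ ^ T * (2 * M) ∧
    ∃ R : ℤ[X], (∀ n, |R.coeff n| ≤ 2 * D) ∧ x = aeval lam⁻¹ R} with hF
  let G : Set (ℕ × ℝ) := (Set.Iio T) ×ˢ F
  have hGfin : G.Finite := (Set.finite_Iio T).prod hFfin
  let f : List (Fin m) → List (Fin m) → ℕ × ℝ := fun σ τ =>
    (wordP p τ - wordP p σ, lam⁻¹ ^ (wordP p σ + T) * (wordB lam p b τ - wordB lam p b σ))
  have hmaps : ∀ σ, Set.MapsTo (f σ) (Nbr lam p b T M σ) G := by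
    rintro σ τ ⟨h1, h2, x, y, hx, hy, h3⟩
    refine ⟨?_, ?_, ?_⟩
    · show wordP p τ - wordP p σ < T
      omega
    · show |lam⁻¹ ^ (wordP p σ + T) * (wordB lam p b τ - wordB lam p b σ)| ≤ _
      rw [SW_apply, SW_apply] at h3
      obtain ⟨n, hn⟩ := Nat.exists_eq_add_of_le h1
      have h4 : lam⁻¹ ^ wordP p σ * lam ^ wordP p σ = 1 := by
        rw [← mul_pow, inv_mul_cancel₀ hlam0.ne', one_pow]
      have h5 : lam⁻¹ ^ (wordP p σ + T) * (wordB lam p b τ - wordB lam p b σ)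
          = lam⁻¹ ^ T * (y - lam ^ n * x) := by
        rw [hn, pow_add] at h3
        rw [pow_add]
        linear_combination (lam⁻¹ ^ wordP p σ * lam⁻¹ ^ T) * h3 +
          (lam⁻¹ ^ T * (y - lam ^ n * x)) * h4
      rw [h5, abs_mul, abs_of_pos (pow_pos (inv_pos.2 hlam0) _)]
      have h6 : |lam ^ n * x| ≤ M := by
        rw [abs_mul, abs_of_pos (pow_pos hlam0 _)]
        have : lam ^ n ≤ 1 := pow_le_one₀ hlam0.le hlam1.le
        nlinarith [abs_nonneg x]
      have h7 := abs_sub y (lam ^ n * x)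
      have h8 : |y - lam ^ n * x| ≤ 2 * M := by linarith
      gcongr
    · obtain ⟨R1, a1, -, a3⟩ := exists_poly lam hlam0 p hp b z hz D hD0 hD τ
        (wordP p σ + T) (by omega)
      obtain ⟨R2, c1, -, c3⟩ := exists_poly lam hlam0 p hp b z hz D hD0 hD σ
        (wordP p σ + T) (by omega)
      refine ⟨R1 - R2, fun n => ?_, ?_⟩
      · rw [coeff_sub]
        have := abs_sub (R1.coeff n) (R2.coeff n)
        have := a1 n
        have := c1 n
        linarith
      · show lam⁻¹ ^ (wordP p σ + T) * (wordB lam p b τ - wordB lam p b σ) = _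
        rw [map_sub, ← a3, ← c3]; ring
  have hinjOn : ∀ σ, σ ≠ [] → Set.InjOn (f σ) (Nbr lam p b T M σ) := by
    intro σ hσ τ hτ τ' hτ' heq
    by_contra hne
    have hpos := wordP_pos p hp σ hσ
    have hnil : ∀ τ ∈ Nbr lam p b T M σ, τ ≠ [] := by
      rintro _ ⟨h1, -⟩ rfl
      simp [wordP] at h1 hpos
      omega
    refine hinj τ τ' (hnil _ hτ) (hnil _ hτ') hne ?_
    have e1 : wordP p τ - wordP p σ = wordP p τ' - wordP p σ := congrArg Prod.fst heq
    have e2 : lam⁻¹ ^ (wordP p σ + T) * (wordB lam p b τ - wordB lam p b σ) =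
      lam⁻¹ ^ (wordP p σ + T) * (wordB lam p b τ' - wordB lam p b σ) := congrArg Prod.snd heq
    have e3 := mul_left_cancel₀ (pow_pos (inv_pos.2 hlam0) _).ne' e2
    have e4 : wordP p τ = wordP p τ' := by have := hτ.1; have := hτ'.1; omega
    funext x
    rw [SW_apply, SW_apply, e4]
    linarith
  have hNfin : ∀ σ, σ ≠ [] → (Nbr lam p b T M σ).Finite := fun σ hσ =>
    Set.Finite.of_finite_image (hGfin.subset (hmaps σ).image_subset) (hinjOn σ hσ)
  have hcard : ∀ σ, σ ≠ [] → (Nbr lam p b T M σ).ncard ≤ G.ncard := fun σ hσ =>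
    Set.ncard_le_ncard_of_injOn (f σ) (hmaps σ) (hinjOn σ hσ) hGfin
  -- a word with the maximal number of neighbours
  obtain ⟨σ, hσ, hmax⟩ : ∃ σ : List (Fin m), σ ≠ [] ∧ ∀ τ, τ ≠ [] →
      (Nbr lam p b T M τ).ncard ≤ (Nbr lam p b T M σ).ncard := by
    let A : Set ℕ := (fun σ => (Nbr lam p b T M σ).ncard) '' {σ | σ ≠ []}
    have hA : A.Nonempty := ⟨_, [⟨0, by omega⟩], by simp, rfl⟩
    have hbdd : BddAbove A := ⟨G.ncard, by rintro _ ⟨σ, hσ, rfl⟩; exact hcard σ hσ⟩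
    obtain ⟨σ, hσ, h⟩ := Nat.sSup_mem hA hbdd
    exact ⟨σ, hσ, fun τ hτ => (le_csSup hbdd ⟨τ, hτ, rfl⟩).trans h.ge⟩
  have hkey : ∀ ρ, (fun τ => ρ ++ τ) '' Nbr lam p b T M σ = Nbr lam p b T M (ρ ++ σ) := by
    intro ρ
    have hne : ρ ++ σ ≠ [] := by simp [hσ]
    refine Set.eq_of_subset_of_ncard_le (Nbr_append lam p b T M ρ σ) ?_ (hNfin _ hne)
    rw [Set.ncard_image_of_injective _ (List.append_right_injective ρ)]
    exact hmax _ hne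
  -- one-sided disjointness
  have hdisj : ∀ (i j : Fin m) (ρ ρ' : List (Fin m)) (x y : ℝ), i ≠ j → |x| < M → |y| < M →
      wordP p (i :: ρ ++ σ) ≤ wordP p (j :: ρ' ++ σ) →
      SW lam p b (i :: ρ ++ σ) x ≠ SW lam p b (j :: ρ' ++ σ) y := by
    intro i j ρ ρ' x y hij hx hy hle heq
    obtain ⟨τ, s, h1, h2, h3⟩ := exists_prefix p T hT0 hT _ _ hle
    have hmem : τ ∈ Nbr lam p b T M (i :: ρ ++ σ) := by
      refine ⟨h2, h3, SW lam p b s y, x, hSWI s y hy, hx, ?_⟩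
      rw [← SW_append, ← h1, heq]
    rw [← hkey] at hmem
    obtain ⟨τ', -, rfl⟩ := hmem
    simp only [List.cons_append, List.cons.injEq] at h1
    exact hij h1.1.symm
  refine ⟨⋃ ρ : List (Fin m), SW lam p b (ρ ++ σ) '' {x | |x| < M}, ?_, ?_, ?_, ?_⟩
  · exact ⟨_, Set.mem_iUnion.2 ⟨[], 0, by simpa using hM0, rfl⟩⟩
  · refine isOpen_iUnion fun ρ => ?_
    have hopen : IsOpen {x : ℝ | |x| < M} := isOpen_lt continuous_abs continuous_const
    have : SW lam p b (ρ ++ σ) = (fun x => x + wordB lam p b (ρ ++ σ)) ∘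
        (fun x => lam ^ wordP p (ρ ++ σ) * x) := by
      funext x; rw [SW_apply]; rfl
    rw [this, Set.image_comp]
    exact (isOpenMap_add_right _) _ (((Homeomorph.mulLeft₀ _ (pow_pos hlam0 (wordP p (ρ ++ σ))).ne').isOpenMap) _ hopen)
  · rintro _ hw
    obtain ⟨i, _, hu, rfl⟩ := Set.mem_iUnion.1 hw
    obtain ⟨ρ, x, hx, rfl⟩ := Set.mem_iUnion.1 hu
    exact Set.mem_iUnion.2 ⟨i :: ρ, x, hx, rfl⟩
  · intro i j hij
    rw [Set.eq_empty_iff_forall_notMem]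
    rintro w ⟨⟨_, hu, rfl⟩, ⟨_, hv, hvw⟩⟩
    obtain ⟨ρ, x, hx, rfl⟩ := Set.mem_iUnion.1 hu
    obtain ⟨ρ', y, hy, rfl⟩ := Set.mem_iUnion.1 hv
    rcases le_total (wordP p (i :: ρ ++ σ)) (wordP p (j :: ρ' ++ σ)) with h | h
    · exact hdisj i j ρ ρ' x y hij hx hy h hvw.symm
    · exact hdisj j i ρ' ρ y x hij.symm hy hx h hvw

theorem stmt2 (lam : ℝ) (hlam0 : 0 < lam) (hlam1 : lam < 1)
    (hPisot : IsPisot lam⁻¹)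
    {m : ℕ} (hm : 2 ≤ m) (p : Fin m → ℕ) (hp : ∀ i, 1 ≤ p i)
    (b : Fin m → ℝ) (hbZ : ∀ i, ∃ z : ℤ, b i = (z : ℝ)) :
    OSC lam p b ↔
      ∀ σ τ : List (Fin m), σ ≠ [] → τ ≠ [] → σ ≠ τ → SW lam p b σ ≠ SW lam p b τ := by
  constructor
  · intro h σ τ _ _ hne
    exact osc_forward lam hlam0 hlam1 p hp b h σ τ hne
  · exact osc_backward lam hlam0 hlam1 hPisot hm p hp b hbZ

end PVOSC
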